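/- For every smooth function ψ : ℝ³ → ℂ⁴ and every k ∈ {1,2,3}, the total angular momentum operator J_k = L_k + (1/2)Σ_k commutes with Dirac's operator K: J_k(Kψ) = K(J_kψ). -/

import Mathlib

noncomputable section

open Matrix

/-- Physical space ℝ³. -/
abbrev E3 := EuclideanSpace ℝ (Fin 3)

/-- The Pauli matrices σ₁, σ₂, σ₃ (indexed by `Fin 3`, with `pauli 0 = σ₁`, etc.). -/
def pauli : Fin 3 → Matrix (Fin 2) (Fin 2) ℂ
  | 0 => !![0, 1; 1, 0]
  | 1 => !![0, -Complex.I; Complex.I, 0]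
  | 2 => !![1, 0; 0, -1]

/-- The 4×4 block matrix `[[A, B], [C, D]]` built from 2×2 blocks. -/
def qblock (A B C D : Matrix (Fin 2) (Fin 2) ℂ) : Matrix (Fin 4) (Fin 4) ℂ :=
  Matrix.reindex finSumFinEquiv finSumFinEquiv (Matrix.fromBlocks A B C D)

/-- The Dirac matrix `β = γ⁰ = [[I₂,0],[0,−I₂]]`. -/
def betaM : Matrix (Fin 4) (Fin 4) ℂ := qblock 1 0 0 (-1)

/-- The spin matrices `Σⱼ = [[σⱼ,0],[0,σⱼ]]` for j = 1,2,3. -/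
def SigM (j : Fin 3) : Matrix (Fin 4) (Fin 4) ℂ := qblock (pauli j) 0 0 (pauli j)

/-- The partial derivative `∂ⱼψ` of a ℂ⁴-valued function on ℝ³. -/
def pd (j : Fin 3) (ψ : E3 → Fin 4 → ℂ) : E3 → Fin 4 → ℂ :=
  fun x => fderiv ℝ ψ x (EuclideanSpace.single j 1)

/-- The orbital angular momentum operator `Lⱼψ = −i (x × ∇ψ)ⱼ` (cyclic indices in `Fin 3`). -/
def Lop (j : Fin 3) (ψ : E3 → Fin 4 → ℂ) : E3 → Fin 4 → ℂ :=
  fun x => (-Complex.I) • (x (j + 1) • pd (j + 2) ψ x - x (j + 2) • pd (j + 1) ψ x)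

/-- The operator `L²ψ = Σⱼ Lⱼ(Lⱼψ)`. -/
def L2op (ψ : E3 → Fin 4 → ℂ) : E3 → Fin 4 → ℂ :=
  fun x => ∑ j, Lop j (Lop j ψ) x

/-- The operator `(Σ·L)ψ = Σⱼ Σⱼ(Lⱼψ)`. -/
def SigL (ψ : E3 → Fin 4 → ℂ) : E3 → Fin 4 → ℂ :=
  fun x => ∑ j, (SigM j).mulVec (Lop j ψ x)

/-- Dirac's operator `Kψ = β(ψ + (Σ·L)ψ)`. -/
def Kop (ψ : E3 → Fin 4 → ℂ) : E3 → Fin 4 → ℂ :=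
  fun x => betaM.mulVec (ψ x + SigL ψ x)


/-- The total angular momentum operators `Jₖψ = Lₖψ + (1/2)Σₖψ`. -/
def Jop (k : Fin 3) (ψ : E3 → Fin 4 → ℂ) : E3 → Fin 4 → ℂ :=
  fun x => Lop k ψ x + ((1 : ℂ) / 2) • (SigM k).mulVec (ψ x)

/-- The 4×4 matrix `β` commutes with the spin matrices. -/
lemma betaM_mul_SigM (j : Fin 3) : betaM * SigM j = SigM j * betaM := by
  simp only [betaM, SigM, qblock, reindex_apply, submatrix_mul_equiv, fromBlocks_multiply]
  simp

lemma pauli_mul_sub (j : Fin 3) :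
    pauli j * pauli (j + 1) - pauli (j + 1) * pauli j =
      (2 * Complex.I) • pauli (j + 2) := by
  fin_cases j <;> ext a b <;> fin_cases a <;> fin_cases b <;>
    simp [pauli] <;> ring_nf <;> simp

lemma SigM_mul_sub (j : Fin 3) :
    SigM j * SigM (j + 1) - SigM (j + 1) * SigM j = (2 * Complex.I) • SigM (j + 2) := by
  have key (A B : Matrix (Fin 2) (Fin 2) ℂ) :
      qblock A 0 0 A * qblock B 0 0 B = qblock (A * B) 0 0 (A * B) := by
    simp only [qblock, reindex_apply, submatrix_mul_equiv, fromBlocks_multiply]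
    simp
  simp only [SigM, key]
  have := pauli_mul_sub j
  rw [sub_eq_iff_eq_add] at this ⊢
  rw [this]
  ext a b
  rcases h : (finSumFinEquiv (m := 2) (n := 2)).symm a <;>
    rcases h' : (finSumFinEquiv (m := 2) (n := 2)).symm b <;>
    simp [qblock, h, h']

lemma contDiff_pd {ψ : E3 → Fin 4 → ℂ} (hψ : ContDiff ℝ (⊤ : ℕ∞) ψ) (j : Fin 3) :
    ContDiff ℝ (⊤ : ℕ∞) (pd j ψ) :=
  (hψ.fderiv_right (by simp)).clm_apply contDiff_const

lemma contDiff_Lop {ψ : E3 → Fin 4 → ℂ} (hψ : ContDiff ℝ (⊤ : ℕ∞) ψ) (j : Fin 3) :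
    ContDiff ℝ (⊤ : ℕ∞) (Lop j ψ) := by
  have h1 := contDiff_pd hψ (j + 1)
  have h2 := contDiff_pd hψ (j + 2)
  have hx (i : Fin 3) : ContDiff ℝ (⊤ : ℕ∞) (fun x : E3 => x i) := by fun_prop
  exact (((hx _).smul h2).sub ((hx _).smul h1)).const_smul (-Complex.I)

lemma differentiable_mulVec {f : E3 → Fin 4 → ℂ} (hf : Differentiable ℝ f)
    (A : Matrix (Fin 4) (Fin 4) ℂ) : Differentiable ℝ (fun x => A *ᵥ f x) :=
  ((A.mulVecLin.restrictScalars ℝ).toContinuousLinearMap).differentiable.comp hf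

lemma pd_mulVec {f : E3 → Fin 4 → ℂ} (hf : Differentiable ℝ f)
    (A : Matrix (Fin 4) (Fin 4) ℂ) (j : Fin 3) (x : E3) :
    pd j (fun y => A *ᵥ f y) x = A *ᵥ pd j f x := by
  have h := ((A.mulVecLin.restrictScalars ℝ).toContinuousLinearMap.hasFDerivAt).comp x
    (hf x).hasFDerivAt
  exact congrArg (fun T : E3 →L[ℝ] Fin 4 → ℂ => T (EuclideanSpace.single j 1)) h.fderiv

lemma pd_add {f g : E3 → Fin 4 → ℂ} (hf : Differentiable ℝ f) (hg : Differentiable ℝ g)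
    (j : Fin 3) (x : E3) :
    pd j (fun y => f y + g y) x = pd j f x + pd j g x := by
  simp [pd, fderiv_fun_add (hf x) (hg x)]

lemma pd_comm {ψ : E3 → Fin 4 → ℂ} (hψ : ContDiff ℝ (⊤ : ℕ∞) ψ) (i j : Fin 3) (x : E3) :
    pd i (pd j ψ) x = pd j (pd i ψ) x := by
  have hd : Differentiable ℝ (fderiv ℝ ψ) :=
    (hψ.fderiv_right (m := (⊤ : ℕ∞)) (by simp)).differentiable (by simp)
  have key (a b : Fin 3) : pd a (pd b ψ) x =
      fderiv ℝ (fderiv ℝ ψ) x (EuclideanSpace.single a 1) (EuclideanSpace.single b 1) := by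
    unfold pd
    rw [fderiv_clm_apply (hd x) (differentiableAt_const _)]
    simp
  rw [key, key]
  have h2 : minSmoothness ℝ 2 ≤ ((⊤ : ℕ∞) : WithTop ℕ∞) := by
    rw [minSmoothness_of_isRCLikeNormedField]
    exact WithTop.coe_le_coe.2 (le_top : (2 : ℕ∞) ≤ ⊤)
  exact hψ.contDiffAt.isSymmSndFDerivAt h2 _ _

/-- The action of `∂ᵢ` on `Lⱼψ`. -/
lemma pd_Lop {ψ : E3 → Fin 4 → ℂ} (hψ : ContDiff ℝ (⊤ : ℕ∞) ψ) (i j : Fin 3) (x : E3) :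
    pd i (Lop j ψ) x = (-Complex.I) •
      ((x (j + 1) • pd i (pd (j + 2) ψ) x + (if j + 1 = i then 1 else 0 : ℝ) • pd (j + 2) ψ x) -
       (x (j + 2) • pd i (pd (j + 1) ψ) x + (if j + 2 = i then 1 else 0 : ℝ) • pd (j + 1) ψ x)) := by
  have hp (a : Fin 3) := ((contDiff_pd hψ a).differentiable (by simp) x).hasFDerivAt
  have hx (a : Fin 3) : HasFDerivAt (fun y : E3 => y a) (EuclideanSpace.proj a : E3 →L[ℝ] ℝ) x :=
    (EuclideanSpace.proj a : E3 →L[ℝ] ℝ).hasFDerivAt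
  have h := (((hx (j + 1)).smul (hp (j + 2))).sub ((hx (j + 2)).smul (hp (j + 1)))).const_smul
    (-Complex.I)
  have h' := congrArg (fun T : E3 →L[ℝ] Fin 4 → ℂ => T (EuclideanSpace.single i 1)) h.fderiv
  refine Eq.trans h' ?_
  simp [pd]

lemma Lop_mulVec {f : E3 → Fin 4 → ℂ} (hf : Differentiable ℝ f)
    (A : Matrix (Fin 4) (Fin 4) ℂ) (j : Fin 3) (x : E3) :
    Lop j (fun y => A *ᵥ f y) x = A *ᵥ Lop j f x := by
  simp only [Lop, pd_mulVec hf, mulVec_smul, mulVec_sub]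

lemma Lop_add {f g : E3 → Fin 4 → ℂ} (hf : Differentiable ℝ f) (hg : Differentiable ℝ g)
    (j : Fin 3) (x : E3) :
    Lop j (fun y => f y + g y) x = Lop j f x + Lop j g x := by
  simp only [Lop, pd_add hf hg]
  module

/-- The commutation relation `[Lⱼ, Lⱼ₊₁] = i Lⱼ₊₂`. -/
lemma Lop_comm {ψ : E3 → Fin 4 → ℂ} (hψ : ContDiff ℝ (⊤ : ℕ∞) ψ) (j : Fin 3) (x : E3) :
    Lop j (Lop (j + 1) ψ) x - Lop (j + 1) (Lop j ψ) x = Complex.I • Lop (j + 2) ψ x := by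
  rw [Lop, Lop]
  simp only [pd_Lop hψ]
  rw [Lop]
  have h01 := pd_comm hψ 0 1 x
  have h02 := pd_comm hψ 0 2 x
  have h12 := pd_comm hψ 1 2 x
  ext a
  fin_cases j <;> simp [h01, h02, h12] <;> ring

lemma sum_fin_three_cyclic {M : Type*} [AddCommMonoid M] (f : Fin 3 → M) (k : Fin 3) :
    ∑ j, f j = f k + f (k + 1) + f (k + 2) := by
  rw [← Equiv.sum_comp (Equiv.addLeft k), Fin.sum_univ_three]
  simp

/-- For smooth `ψ : ℝ³ → ℂ⁴`, each total angular momentum operator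
`Jₖ = Lₖ + (1/2)Σₖ` commutes with Dirac's operator `K`: `Jₖ(Kψ) = K(Jₖψ)`. -/
theorem Jop_comm_Kop (ψ : E3 → Fin 4 → ℂ) (hψ : ContDiff ℝ (⊤ : ℕ∞) ψ)
    (k : Fin 3) (x : E3) :
    Jop k (Kop ψ) x = Kop (Jop k ψ) x := by
  have hL (j : Fin 3) := (contDiff_Lop hψ j).differentiable (by simp)
  have hd : Differentiable ℝ ψ := hψ.differentiable (by simp)
  have hSL (j : Fin 3) := differentiable_mulVec (hL j) (SigM j)
  have hSigL : SigL ψ = fun y => (SigM k *ᵥ Lop k ψ y + SigM (k + 1) *ᵥ Lop (k + 1) ψ y) +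
      SigM (k + 2) *ᵥ Lop (k + 2) ψ y := by
    funext y
    exact sum_fin_three_cyclic _ k
  have hdSigL : Differentiable ℝ (SigL ψ) := by
    rw [hSigL]
    exact ((hSL _).add (hSL _)).add (hSL _)
  have hJ : Jop k ψ = fun y => Lop k ψ y + ((1 / 2 : ℂ) • SigM k) *ᵥ ψ y := by
    funext y
    rw [Jop, smul_mulVec]
  have hLJ (j : Fin 3) : Lop j (Jop k ψ) x =
      Lop j (Lop k ψ) x + (1 / 2 : ℂ) • SigM k *ᵥ Lop j ψ x := by
    rw [hJ, Lop_add (hL k) (differentiable_mulVec hd _), Lop_mulVec hd, smul_mulVec]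
  have hLK : Lop k (Kop ψ) x = betaM *ᵥ (Lop k ψ x + (SigM k *ᵥ Lop k (Lop k ψ) x +
      SigM (k + 1) *ᵥ Lop k (Lop (k + 1) ψ) x + SigM (k + 2) *ᵥ Lop k (Lop (k + 2) ψ) x)) := by
    unfold Kop
    rw [Lop_mulVec (hd.fun_add hdSigL), Lop_add hd hdSigL, hSigL,
      Lop_add ((hSL _).fun_add (hSL _)) (hSL _), Lop_add (hSL _) (hSL _),
      Lop_mulVec (hL _), Lop_mulVec (hL _), Lop_mulVec (hL _)]
  have e1 : k + 2 + 1 = k := by fin_cases k <;> rfl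
  have e2 : k + 2 + 2 = k + 1 := by fin_cases k <;> rfl
  have c1 := sub_eq_iff_eq_add.mp (Lop_comm hψ k x)
  have c2 := Lop_comm hψ (k + 2) x
  have s1 := sub_eq_iff_eq_add.mp (SigM_mul_sub k)
  have s2 := SigM_mul_sub (k + 2)
  rw [e1, e2, sub_eq_iff_eq_add] at c2 s2
  rw [Jop, hLK, Kop, Kop, mulVec_mulVec, ← betaM_mul_SigM, ← mulVec_mulVec, ← mulVec_smul,
    ← mulVec_add]
  congr 1
  rw [hSigL, SigL, sum_fin_three_cyclic _ k, hLJ, hLJ, hLJ, Jop, c1, c2]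
  simp only [mulVec_add, mulVec_smul, mulVec_mulVec, s1, s2, add_mulVec, smul_mulVec]
  module

end
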